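/- arXiv:math-ph/0702055 — 2 statements merged into one kernel-verified Lean document; each statement's English description precedes it below -/
import Mathlib

section
/- Let Q be a quiver, P the path algebra of its double Q̄ over k, and L = P/[P,P] the k-module with basis the cyclic paths (necklaces) in Q̄. The k-linear map δ_or : L → L ⊗ L defined by δ_or([a₁⋯aₙ]) = Σ_{i < j} ω(a_i, a_j) · ([(a_j)_t a_{j+1}⋯a_{i−1}] ⊗ [(a_i)_t a_{i+1}⋯a_{j−1}] − [(a_i)_t a_{i+1}⋯a_{j−1}] ⊗ [(a_j)_t a_{j+1}⋯a_{i−1}]), with indices taken cyclically modulo n, is a Lie cobracket on L. -/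
/-!
Statement 8: for a quiver `Q`, the map
`δ_or([a₁⋯aₙ]) = Σ_{i<j} ω(a_i,a_j) ([(a_j)_t a_{j+1}⋯a_{i−1}] ⊗ [(a_i)_t a_{i+1}⋯a_{j−1}]
− [(a_i)_t a_{i+1}⋯a_{j−1}] ⊗ [(a_j)_t a_{j+1}⋯a_{i−1}])` is a Lie cobracket on the
necklace module `L = P/[P,P]`, the free `k`-module with basis the cyclic paths in `Q̄`.
-/

open TensorProduct

noncomputable section

section LieCoalg

variable (k : Type*) [CommRing k] (g : Type*) [AddCommGroup g] [Module k g]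

/-- `τ_{(12)}` on `g ⊗ g`. -/
def tau2 : g ⊗[k] g →ₗ[k] g ⊗[k] g := (TensorProduct.comm k g g).toLinearMap

/-- `τ_{(132)}` on the triple tensor product `g ⊗ (g ⊗ g)`: `x⊗y⊗z ↦ y⊗z⊗x`. -/
def tau132 : g ⊗[k] (g ⊗[k] g) →ₗ[k] g ⊗[k] (g ⊗[k] g) :=
  (TensorProduct.assoc k g g g).toLinearMap ∘ₗ
    (TensorProduct.comm k g (g ⊗[k] g)).toLinearMap

/-- `τ_{(123)}` on the triple tensor product: `x⊗y⊗z ↦ z⊗x⊗y`. -/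
def tau123 : g ⊗[k] (g ⊗[k] g) →ₗ[k] g ⊗[k] (g ⊗[k] g) :=
  tau132 k g ∘ₗ tau132 k g

variable {k g}

/-- `(δ ⊗ Id) ∘ δ : g → g ⊗ g ⊗ g` (triple tensor product associated as `g ⊗ (g ⊗ g)`). -/
def leftIter (δ : g →ₗ[k] g ⊗[k] g) : g →ₗ[k] g ⊗[k] (g ⊗[k] g) :=
  ((TensorProduct.assoc k g g g).toLinearMap ∘ₗ LinearMap.rTensor g δ) ∘ₗ δ

/-- `δ : g → g ⊗ g` is a Lie cobracket if `τ_{(12)} ∘ δ = −δ` and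
`(Id + τ_{(123)} + τ_{(132)}) ∘ (δ ⊗ Id) ∘ δ = 0` (co-Jacobi identity). -/
def IsLieCobracket (δ : g →ₗ[k] g ⊗[k] g) : Prop :=
  (tau2 k g) ∘ₗ δ = -δ ∧
  (LinearMap.id + tau123 k g + tau132 k g) ∘ₗ leftIter δ = 0

end LieCoalg

/-! ### Quivers, double quivers, paths and necklaces -/

/-- The arrows of the double quiver `Q̄ = Q ⊔ Q*`: `.inl e = e` and `.inr e = e*`. -/
abbrev Arr (E : Type*) := E ⊕ E

/-- The source `a_s` of an arrow of the double quiver. -/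
def asrc {I E : Type*} (s t : E → I) : Arr E → I
  | .inl e => s e
  | .inr e => t e

/-- The target `a_t` of an arrow of the double quiver. -/
def atgt {I E : Type*} (s t : E → I) : Arr E → I
  | .inl e => t e
  | .inr e => s e

open scoped Classical in
/-- The pairing `ω`: `ω(e,e*) = 1`, `ω(e*,e) = −1` for `e ∈ Q`, and `ω(a,b) = 0`
whenever `b ≠ a*`. -/
def omg (k : Type*) [CommRing k] {E : Type*} : Arr E → Arr E → k
  | .inl e, .inr e' => if e = e' then 1 else 0
  | .inr e, .inl e' => if e = e' then -1 else 0
  | _, _ => 0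

/-- `IsPathFrom s t v l`: `l` is a composable sequence of arrows starting at `v`. -/
def IsPathFrom {I E : Type*} (s t : E → I) : I → List (Arr E) → Prop
  | _, [] => True
  | v, a :: l => asrc s t a = v ∧ IsPathFrom s t (atgt s t a) l

/-- The target of a path. -/
def pathTgt {I E : Type*} (s t : E → I) : I → List (Arr E) → I
  | v, [] => v
  | _, a :: l => pathTgt s t (atgt s t a) l

/-- A path in the double quiver `Q̄`. -/
structure QPath {I E : Type*} (s t : E → I) : Type _ where
  src : I
  arrows : List (Arr E)
  valid : IsPathFrom s t src arrows

/-- A closed path in the double quiver. -/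
structure ClosedQPath {I E : Type*} (s t : E → I) : Type _ where
  path : QPath s t
  closed : pathTgt s t path.src path.arrows = path.src

/-- Rotation of closed paths (moving the initial edge): the equivalence closure of this
relation identifies exactly the closed paths giving the same cyclic path (necklace). -/
def RotRel {I E : Type*} (s t : E → I) (p q : ClosedQPath s t) : Prop :=
  ∃ (a : Arr E) (l : List (Arr E)),
    p.path.arrows = a :: l ∧ q.path.arrows = l ++ [a] ∧ q.path.src = atgt s t a

/-- Necklaces: cyclic paths in the double quiver, i.e. closed paths up to rotation. -/
def Necklace {I E : Type*} (s t : E → I) : Type _ := Quot (RotRel s t)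

variable (k : Type*) [CommRing k] {I E : Type*} (s t : E → I)

/-- `L = P/[P,P]`: the free `k`-module with basis the necklaces (cyclic paths) in `Q̄`. -/
abbrev NeckMod := Necklace s t →₀ k

open scoped Classical in
/-- The basis vector of a necklace presented by a starting vertex and a list of arrows,
or `0` if the data does not define a closed path. -/
def mkN (v : I) (l : List (Arr E)) : NeckMod k s t :=
  if h : IsPathFrom s t v l ∧ pathTgt s t v l = v then
    Finsupp.single (Quot.mk (RotRel s t) ⟨⟨v, l, h.1⟩, h.2⟩) (1 : k) else 0

/-- The summand of `δ_or` for a pair of positions `i < j` of the cyclic path `(v, l)`: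
`ω(a_i,a_j) ([(a_j)_t a_{j+1}⋯a_{i−1}] ⊗ [(a_i)_t a_{i+1}⋯a_{j−1}] − swap)`. -/
def dorTerm (v : I) (l : List (Arr E)) (i j : ℕ) :
    NeckMod k s t ⊗[k] NeckMod k s t :=
  match l[i]?, l[j]? with
  | some a, some b =>
      let inner := mkN k s t (atgt s t a) ((l.drop (i+1)).take (j - i - 1))
      let outer := mkN k s t (atgt s t b) (l.drop (j+1) ++ l.take i)
      omg k a b • (outer ⊗ₜ[k] inner - inner ⊗ₜ[k] outer)
  | _, _ => (0 : k) • (mkN k s t v [] ⊗ₜ[k] mkN k s t v [])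

/-- The necklace Lie cobracket `δ_or` on `L` (computed on a representative closed path;
the result does not depend on the choice of representative). -/
def deltaOr : NeckMod k s t →ₗ[k] NeckMod k s t ⊗[k] NeckMod k s t :=
  Finsupp.lift (NeckMod k s t ⊗[k] NeckMod k s t) k (Necklace s t) fun q =>
    let p := q.out
    ∑ i ∈ Finset.range p.path.arrows.length, ∑ j ∈ Finset.range p.path.arrows.length,
      if i < j then dorTerm k s t p.path.src p.path.arrows i j
      else (0 : k) • dorTerm k s t p.path.src p.path.arrows i j

/-!
The element `δ_or [w]` is a sum over all ordered pairs of positions `(i, j)` of the cyclic word `w`: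
cutting `w` at `i` and `j` contributes `ω(a_i, a_j) [w(j, i)] ⊗ [w(i, j)]`, where `w(i, j)` is the
word read strictly between `i` and `j`; the two orders of an unordered pair give the two terms in
the definition, since `ω` is antisymmetric. No base point occurs, so `δ_or` is well defined on
necklaces.

In `(δ_or ⊗ Id) (δ_or [w])` the word `w(j, i)` is cut once more at positions `p`, `q` such that
`i, j, p, q` are in cyclic order, which gives `T - U` with
`T = ∑ ω(a_i, a_j) ω(a_p, a_q) [w(q, i) w(j, p)] ⊗ [w(p, q)] ⊗ [w(i, j)]` and `U` the same sum with
the first two tensor factors exchanged. The set of these quadruples is stable under exchanging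
`(i, j)` and `(p, q)`, and `[w(q, i) w(j, p)] = [w(j, p) w(q, i)]`, so `U = τ_{(123)} T`. Since
`τ_{(123)}` has order three, `Id + τ_{(123)} + τ_{(132)}` kills `T - τ_{(123)} T`.
-/

/-! ### Cyclic permutations of a triple tensor product -/

section TripleTensor

variable {k} {g : Type*} [AddCommGroup g] [Module k g]

lemma tau132_tmul (x y z : g) :
    tau132 k g (x ⊗ₜ[k] (y ⊗ₜ[k] z)) = y ⊗ₜ[k] (z ⊗ₜ[k] x) := by
  simp [tau132]

lemma tau123_tmul (x y z : g) :
    tau123 k g (x ⊗ₜ[k] (y ⊗ₜ[k] z)) = z ⊗ₜ[k] (x ⊗ₜ[k] y) := by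
  simp [tau123, tau132_tmul]

lemma tau132_comp_tau123 : tau132 k g ∘ₗ tau123 k g = LinearMap.id := by
  ext x y z
  simp [tau123_tmul, tau132_tmul]

lemma cyclicSum_sub_tau123 (u : g ⊗[k] (g ⊗[k] g)) :
    (LinearMap.id + tau123 k g + tau132 k g : g ⊗[k] (g ⊗[k] g) →ₗ[k] g ⊗[k] (g ⊗[k] g))
      (u - tau123 k g u) = 0 := by
  have h₁ : tau132 k g (tau123 k g u) = u := LinearMap.congr_fun tau132_comp_tau123 u
  have h₂ : tau123 k g (tau123 k g u) = tau132 k g u := congrArg (tau132 k g) h₁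
  simp only [LinearMap.add_apply, LinearMap.id_apply, map_sub, h₁, h₂]
  abel

end TripleTensor

/-! ### Sums over pairs of positions -/

lemma sum_product_self_eq_sum_lt {ι M : Type*} [LinearOrder ι] [AddCommMonoid M] (S : Finset ι)
    (G : ι → ι → M) (hG : ∀ i, G i i = 0) :
    ∑ p ∈ S ×ˢ S, G p.1 p.2 = ∑ p ∈ S ×ˢ S with p.1 < p.2, (G p.1 p.2 + G p.2 p.1) := by
  have hswap : ∑ p ∈ S ×ˢ S with p.1 < p.2, G p.2 p.1 =
      ∑ p ∈ S ×ˢ S with p.2 < p.1, G p.1 p.2 :=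
    Finset.sum_nbij' Prod.swap Prod.swap (by simp +contextual) (by simp +contextual)
      (by simp) (by simp) (by simp)
  rw [Finset.sum_add_distrib, hswap, Finset.sum_filter, Finset.sum_filter,
    ← Finset.sum_add_distrib]
  refine Finset.sum_congr rfl fun p _ => ?_
  rcases lt_trichotomy p.1 p.2 with h | h | h
  · simp [h, h.not_gt]
  · simp [h, hG]
  · simp [h, h.not_gt]

lemma sum_range_add_natCast {n : ℕ} [NeZero n] {M : Type*} [AddCommMonoid M] (c : ZMod n)
    (F : ZMod n → M) : ∑ x ∈ Finset.range n, F (c + x) = ∑ i, F i :=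
  Finset.sum_nbij' (fun x => c + x) (fun i => (i - c).val) (by simp)
    (by simp [ZMod.val_lt])
    (fun x hx => by simp [ZMod.val_natCast_of_lt (Finset.mem_range.mp hx)])
    (by simp) (by simp)

/-! ### Cyclic words -/

section CyclicWord

variable {α : Type*} {n : ℕ} (f : ZMod n → α)

/-- The word `f c, f (c + 1), …, f (c + m - 1)` read off a cyclic word `f` of length `n`,
winding around if `m > n`. -/
def seg (c : ZMod n) (m : ℕ) : List α :=
  (List.range m).map fun r : ℕ => f (c + r)

/-- The number of positions strictly between `i` and `j`, going from `i` to `j` in the cyclic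
direction; it is `n - 1` for `i = j`. -/
def gap (i j : ZMod n) : ℕ := (j - i - 1).val

/-- The word `f (i + 1), …, f (j - 1)` strictly between two positions of a cyclic word. -/
def between (i j : ZMod n) : List α := seg f (i + 1) (gap i j)

@[simp] lemma length_seg (c : ZMod n) (m : ℕ) : (seg f c m).length = m := by simp [seg]

@[simp] lemma length_between (i j : ZMod n) : (between f i j).length = gap i j := length_seg ..

@[simp] lemma seg_zero (c : ZMod n) : seg f c 0 = [] := rfl

lemma seg_append (c : ZMod n) (m p : ℕ) : seg f c m ++ seg f (c + m) p = seg f c (m + p) := by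
  simp [seg, List.range_add, Function.comp_def, add_assoc]

lemma seg_one (c : ZMod n) : seg f c 1 = [f c] := by simp [seg]

lemma seg_succ (c : ZMod n) (m : ℕ) : seg f c (m + 1) = f c :: seg f (c + 1) m := by
  rw [add_comm, ← seg_append, seg_one, Nat.cast_one, List.singleton_append]

lemma seg_succ_last (c : ZMod n) (m : ℕ) : seg f c (m + 1) = seg f c m ++ [f (c + m)] := by
  rw [← seg_append, seg_one]

lemma drop_seg (c : ZMod n) (m r : ℕ) : (seg f c m).drop r = seg f (c + r) (m - r) :=
  List.ext_getElem (by simp) fun i _ _ => by simp [seg, add_assoc]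

lemma take_seg (c : ZMod n) {m r : ℕ} (h : r ≤ m) : (seg f c m).take r = seg f c r :=
  List.ext_getElem (by simpa using h) fun i _ _ => by simp [seg]

lemma getElem?_seg (c : ZMod n) {m x : ℕ} (h : x < m) : (seg f c m)[x]? = some (f (c + x)) := by
  simp [seg, h]

lemma exists_seg_eq [NeZero n] {l : List α} (hl : l.length = n) :
    ∃ f : ZMod n → α, seg f 0 n = l := by
  refine ⟨fun i => l[i.val]'(hl ▸ i.val_lt), List.ext_getElem (by simp [hl]) fun i hi _ => ?_⟩
  rw [length_seg] at hi
  simp [seg, Nat.mod_eq_of_lt hi]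

lemma gap_self_add_one_add (c : ZMod n) {x : ℕ} (hx : x < n) : gap c (c + 1 + x) = x := by
  have h : c + 1 + x - c - 1 = (x : ZMod n) := by ring
  rw [gap, h, ZMod.val_natCast_of_lt hx]

lemma gap_add_natCast (c : ZMod n) {x y : ℕ} (hxy : x < y) (hyx : y ≤ x + n) :
    gap (c + x : ZMod n) (c + y) = y - x - 1 := by
  have h : c + y = c + x + 1 + (y - x - 1 : ℕ) := by
    obtain ⟨d, rfl⟩ := Nat.exists_eq_add_of_lt hxy
    rw [show x + d + 1 - x - 1 = d by omega]
    push_cast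
    ring
  rw [h, gap_self_add_one_add _ (by omega)]

variable [NeZero n]

lemma add_one_add_gap (i j : ZMod n) : i + 1 + gap i j = j := by
  rw [gap, ZMod.natCast_zmod_val]
  ring

lemma gap_add_gap {i j : ZMod n} (h : i ≠ j) : gap i j + gap j i + 2 = n := by
  have hj : j = i + (gap i j + 1 : ℕ) := by
    rw [Nat.cast_add_one, add_comm (gap i j : ZMod n), ← add_assoc, add_one_add_gap]
  have hlt : gap i j + 1 < n := by
    refine lt_of_le_of_ne (ZMod.val_lt _) fun hn => h ?_
    rw [hj, hn, ZMod.natCast_self, add_zero]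
  have hji : gap j i = n - (gap i j + 1) - 1 := by
    have := gap_add_natCast i hlt (by omega)
    rwa [← hj, ZMod.natCast_self, add_zero] at this
  omega

lemma gap_add_one_add_left {i j : ZMod n} {y : ℕ} (hy : y < gap j i) :
    gap (j + 1 + y : ZMod n) i = gap j i - y - 1 := by
  have hlt : gap j i < n := ZMod.val_lt _
  have h := gap_add_natCast (j + 1) hy (by omega)
  rwa [add_one_add_gap] at h

/-- The pairs of positions `(p, q)` such that `z.1, z.2, p, q` are distinct and occur in this cyclic
order. This is encoded by letting the four gaps, together with the four positions themselves, add
up to one turn of the cycle. -/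
def chordsFollowing (z : ZMod n × ZMod n) : Finset (ZMod n × ZMod n) :=
  {w | gap z.1 z.2 + gap z.2 w.1 + gap w.1 w.2 + gap w.2 z.1 + 4 = n}

lemma mem_chordsFollowing {z w : ZMod n × ZMod n} : w ∈ chordsFollowing z ↔
    gap z.1 z.2 + gap z.2 w.1 + gap w.1 w.2 + gap w.2 z.1 + 4 = n := by
  simp [chordsFollowing]

lemma mem_chordsFollowing_comm {z w : ZMod n × ZMod n} :
    w ∈ chordsFollowing z ↔ z ∈ chordsFollowing w := by
  rw [mem_chordsFollowing, mem_chordsFollowing]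
  omega

lemma sum_range_lt_eq_sum_chordsFollowing {M : Type*} [AddCommMonoid M] {i j : ZMod n}
    (hij : i ≠ j) (F : ZMod n × ZMod n → M) :
    ∑ p ∈ Finset.range (gap j i) ×ˢ Finset.range (gap j i) with p.1 < p.2,
      F (j + 1 + p.1, j + 1 + p.2) = ∑ w ∈ chordsFollowing (i, j), F w := by
  have hn := gap_add_gap hij
  refine Finset.sum_nbij' (fun p => (j + 1 + p.1, j + 1 + p.2))
    (fun w => (gap j w.1, gap j w.1 + gap w.1 w.2 + 1)) ?_ ?_ ?_ ?_ (fun _ _ => rfl)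
  · rintro ⟨x, y⟩ hxy
    simp only [Finset.mem_filter, Finset.mem_product, Finset.mem_range] at hxy
    rw [mem_chordsFollowing]
    dsimp only
    rw [gap_add_one_add_left hxy.1.2, gap_add_natCast _ (by omega) (by omega),
      gap_self_add_one_add _ (by omega)]
    omega
  · rintro ⟨p, q⟩ hpq
    rw [mem_chordsFollowing] at hpq
    dsimp only at hpq
    simp only [Finset.mem_filter, Finset.mem_product, Finset.mem_range]
    omega
  · rintro ⟨x, y⟩ hxy
    simp only [Finset.mem_filter, Finset.mem_product, Finset.mem_range] at hxy
    dsimp only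
    rw [gap_add_natCast _ (by omega) (by omega), gap_self_add_one_add _ (by omega)]
    congr 1
    omega
  · rintro ⟨p, q⟩ -
    have hq : j + 1 + (gap j p + gap p q + 1 : ℕ) = q := by
      push_cast
      linear_combination add_one_add_gap j p + add_one_add_gap p q
    rw [add_one_add_gap, hq]

end CyclicWord

/-! ### Arrows, paths and cyclic paths -/

section Paths

variable {k s t}

lemma omg_self (a : Arr E) : omg k a a = 0 := by
  cases a <;> rfl

lemma omg_antisymm (a b : Arr E) : omg k a b = -omg k b a := by
  rcases a with a | a <;> rcases b with b | b <;> simp only [omg, neg_zero] <;>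
    by_cases h : a = b <;> simp [h, Ne.symm]

lemma asrc_eq_atgt_of_omg_ne_zero {a b : Arr E} (h : omg k a b ≠ 0) :
    asrc s t a = atgt s t b := by
  rcases a with a | a <;> rcases b with b | b
  · exact absurd rfl h
  · exact congrArg s (by_contra fun hab => h (if_neg hab))
  · exact congrArg t (by_contra fun hab => h (if_neg hab))
  · exact absurd rfl h

lemma isPathFrom_append (l₁ l₂ : List (Arr E)) (v : I) :
    IsPathFrom s t v (l₁ ++ l₂) ↔
      IsPathFrom s t v l₁ ∧ IsPathFrom s t (pathTgt s t v l₁) l₂ := by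
  induction l₁ generalizing v with
  | nil => simp [IsPathFrom, pathTgt]
  | cons a l ih => simp [IsPathFrom, pathTgt, ih, and_assoc]

lemma pathTgt_append (l₁ l₂ : List (Arr E)) (v : I) :
    pathTgt s t v (l₁ ++ l₂) = pathTgt s t (pathTgt s t v l₁) l₂ := by
  induction l₁ generalizing v with
  | nil => rfl
  | cons _ _ ih => exact ih _

variable {n : ℕ} {f : ZMod n → Arr E}

variable (s t f) in
/-- `f` lists the arrows of a cyclic path of length `n` in the double quiver: consecutive arrows,
in the cyclic sense, are composable. -/
def IsCyclicPath : Prop := ∀ i, atgt s t (f i) = asrc s t (f (i + 1))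

variable (s t f) in
lemma pathTgt_seg (c : ZMod n) (m : ℕ) :
    pathTgt s t (atgt s t (f c)) (seg f (c + 1) m) = atgt s t (f (c + m)) := by
  cases m with
  | zero => simp [pathTgt]
  | succ m => simp [seg_succ_last, pathTgt_append, pathTgt, add_assoc, add_comm (1 : ZMod n)]

lemma IsCyclicPath.isPathFrom_seg (hf : IsCyclicPath s t f) (c : ZMod n) (m : ℕ) :
    IsPathFrom s t (atgt s t (f c)) (seg f (c + 1) m) := by
  induction m generalizing c with
  | zero => trivial
  | succ m ih => rw [seg_succ]; exact ⟨(hf c).symm, ih _⟩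

lemma IsCyclicPath.isPathFrom_between (hf : IsCyclicPath s t f) (i j : ZMod n) :
    IsPathFrom s t (atgt s t (f i)) (between f i j) :=
  hf.isPathFrom_seg i _

lemma IsCyclicPath.pathTgt_between [NeZero n] (hf : IsCyclicPath s t f) (i j : ZMod n) :
    pathTgt s t (atgt s t (f i)) (between f i j) = asrc s t (f j) := by
  rw [between, pathTgt_seg, hf, add_right_comm, add_one_add_gap]

lemma atgt_eq_asrc_of_isPathFrom_seg {c : ZMod n} {m : ℕ} {v : I}
    (h : IsPathFrom s t v (seg f c m)) {r : ℕ} (hr : r + 1 < m) :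
    atgt s t (f (c + r)) = asrc s t (f (c + r + 1)) := by
  obtain ⟨d, rfl⟩ := Nat.exists_eq_add_of_lt hr
  rw [add_assoc, add_assoc, ← seg_append, add_comm 1, seg_succ, seg_succ, isPathFrom_append] at h
  exact h.2.2.1.symm

lemma isCyclicPath_of_closed [NeZero n] {v : I} (h : IsPathFrom s t v (seg f 0 n))
    (hv : pathTgt s t v (seg f 0 n) = v) : IsCyclicPath s t f := by
  intro i
  have hsrc : asrc s t (f 0) = v := by
    obtain ⟨m, hm⟩ := Nat.exists_eq_add_one_of_ne_zero (NeZero.ne n)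
    have hseg : seg f 0 n = f 0 :: seg f (0 + 1) m :=
      (congrArg (seg f 0) hm).trans (seg_succ f 0 m)
    rw [hseg] at h
    exact h.1
  have hturn : IsPathFrom s t v (seg f 0 (n + 1)) := by
    rw [seg_succ_last, isPathFrom_append, hv]
    exact ⟨h, by simpa using hsrc, trivial⟩
  simpa using atgt_eq_asrc_of_isPathFrom_seg hturn (Nat.succ_lt_succ i.val_lt)

end Paths

/-! ### Classes of paths up to rotation -/

section Cobracket

variable {k s t}
variable {L : Type*} {N : I → List (Arr E) → L}

variable (s t N) in
/-- A map on pairs `(v, l)` that takes the same value on a closed path `a :: l` and on its rotation,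
as does the map sending a path to its necklace. -/
def IsRotationInvariant : Prop :=
  ∀ a l, N (asrc s t a) (a :: l) = N (atgt s t a) (l ++ [a])

lemma IsRotationInvariant.append_comm (hN : IsRotationInvariant s t N) {v : I}
    {l₁ : List (Arr E)} (h : IsPathFrom s t v l₁) (l₂ : List (Arr E)) :
    N v (l₁ ++ l₂) = N (pathTgt s t v l₁) (l₂ ++ l₁) := by
  induction l₁ generalizing v l₂ with
  | nil => simp [pathTgt]
  | cons a l ih =>
    obtain ⟨rfl, hl⟩ := h
    rw [List.cons_append, hN, List.append_assoc, ih hl, pathTgt, List.append_assoc,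
      List.singleton_append]

variable {n : ℕ} {f : ZMod n → Arr E}

variable (s t N f) in
/-- The class of the word strictly between the positions `i` and `j` of a cyclic path: the
`[(a_i)_t a_{i+1}⋯a_{j-1}]` of the definition of `δ_or`. -/
def arc (i j : ZMod n) : L := N (atgt s t (f i)) (between f i j)

variable (s t N f) in
/-- The class of what remains of a cyclic path after cutting out the arcs from `z.1` to `z.2` and
from `w.1` to `w.2`, for `w ∈ chordsFollowing z`. -/
def remainder (z w : ZMod n × ZMod n) : L :=
  N (atgt s t (f w.2)) (between f w.2 z.1 ++ between f z.2 w.1)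

lemma remainder_comm [NeZero n] (hN : IsRotationInvariant s t N) (hf : IsCyclicPath s t f)
    {z : ZMod n × ZMod n} (hz : omg k (f z.1) (f z.2) ≠ 0) (w : ZMod n × ZMod n) :
    remainder s t N f z w = remainder s t N f w z := by
  rw [remainder, hN.append_comm (hf.isPathFrom_between _ _), hf.pathTgt_between,
    asrc_eq_atgt_of_omg_ne_zero hz, remainder]

/-! ### The cobracket on words and on cyclic words -/

variable [AddCommGroup L] [Module k L]

variable (k s t N) in
/-- The summand of `δ_or` for the positions `i < j` of a word, where `N v l` plays the role of the
class of `l` in the necklace module; it vanishes if `i` or `j` is out of range. -/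
def pairTerm (l : List (Arr E)) (i j : ℕ) : L ⊗[k] L :=
  match l[i]?, l[j]? with
  | some a, some b =>
      let inner := N (atgt s t a) ((l.drop (i + 1)).take (j - i - 1))
      let outer := N (atgt s t b) (l.drop (j + 1) ++ l.take i)
      omg k a b • (outer ⊗ₜ[k] inner - inner ⊗ₜ[k] outer)
  | _, _ => 0

variable (k s t N) in
/-- The sum over pairs of positions `i < j` that defines `δ_or` on a representative of a
necklace. -/
def wordCobracket (l : List (Arr E)) : L ⊗[k] L :=
  ∑ p ∈ Finset.range l.length ×ˢ Finset.range l.length with p.1 < p.2,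
    pairTerm k s t N l p.1 p.2

lemma tau2_pairTerm (l : List (Arr E)) (i j : ℕ) :
    tau2 k L (pairTerm k s t N l i j) = -pairTerm k s t N l i j := by
  unfold pairTerm
  split
  · simp [tau2, ← smul_neg]
  · simp

lemma tau2_wordCobracket (l : List (Arr E)) :
    tau2 k L (wordCobracket k s t N l) = -wordCobracket k s t N l := by
  simp only [wordCobracket, map_sum, tau2_pairTerm, Finset.sum_neg_distrib]

variable (k s t N f) in
/-- The summand of `δ_or` for an ordered pair of positions of a cyclic path. -/
def chordTerm (i j : ZMod n) : L ⊗[k] L :=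
  omg k (f i) (f j) • (arc s t N f j i ⊗ₜ[k] arc s t N f i j)

variable (f) in
lemma pairTerm_seg (c : ZMod n) {m x y : ℕ} (hxy : x < y) (hym : y < m) (hmn : m ≤ n) :
    pairTerm k s t N (seg f c m) x y = omg k (f (c + x)) (f (c + y)) •
      (N (atgt s t (f (c + y))) (seg f (c + y + 1) (m - y - 1) ++ seg f c x) ⊗ₜ[k]
          arc s t N f (c + x) (c + y) -
        arc s t N f (c + x) (c + y) ⊗ₜ[k]
          N (atgt s t (f (c + y))) (seg f (c + y + 1) (m - y - 1) ++ seg f c x)) := by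
  have hinner : ((seg f c m).drop (x + 1)).take (y - x - 1) = between f (c + x) (c + y) := by
    rw [drop_seg, take_seg _ _ (by omega), between, gap_add_natCast c hxy (by omega),
      Nat.cast_add_one, add_assoc]
  have houter : (seg f c m).drop (y + 1) ++ (seg f c m).take x =
      seg f (c + y + 1) (m - y - 1) ++ seg f c x := by
    rw [drop_seg, take_seg _ _ (by omega), Nat.cast_add_one, add_assoc, Nat.sub_sub]
  simp only [pairTerm, getElem?_seg f c (hxy.trans hym), getElem?_seg f c hym, hinner, houter, arc]

variable (f) in
lemma pairTerm_seg_full_turn (c : ZMod n) {x y : ℕ} (hxy : x < y) (hy : y < n) :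
    pairTerm k s t N (seg f c n) x y =
      chordTerm k s t N f (c + x) (c + y) + chordTerm k s t N f (c + y) (c + x) := by
  have hturn : c + y + 1 + (n - y - 1 : ℕ) = c := by
    have hzero : (y + 1 : ZMod n) + (n - y - 1 : ℕ) = 0 := by
      rw [← Nat.cast_add_one, ← Nat.cast_add, show y + 1 + (n - y - 1) = n by omega,
        ZMod.natCast_self]
    linear_combination hzero
  have hgap : gap (c + y : ZMod n) (c + x) = n - y - 1 + x := by
    have h := gap_add_natCast c (show y < x + n by omega) (by omega)
    rw [Nat.cast_add, ZMod.natCast_self, add_zero] at h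
    omega
  have houter : seg f (c + y + 1) (n - y - 1) ++ seg f c x = between f (c + y) (c + x) := by
    rw [between, hgap, ← seg_append, hturn]
  rw [pairTerm_seg f c hxy hy le_rfl, houter, chordTerm, chordTerm,
    omg_antisymm (f (c + y)) (f (c + x)), neg_smul, ← sub_eq_add_neg, ← smul_sub]
  rfl

variable [NeZero n]

variable (f) in
lemma wordCobracket_seg (c : ZMod n) :
    wordCobracket k s t N (seg f c n) = ∑ z : ZMod n × ZMod n, chordTerm k s t N f z.1 z.2 := by
  have hdiag (i : ZMod n) : chordTerm k s t N f i i = 0 := by simp [chordTerm, omg_self]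
  calc wordCobracket k s t N (seg f c n)
      = ∑ p ∈ Finset.range n ×ˢ Finset.range n with p.1 < p.2,
          (chordTerm k s t N f (c + p.1) (c + p.2) +
            chordTerm k s t N f (c + p.2) (c + p.1)) := by
        rw [wordCobracket, length_seg]
        refine Finset.sum_congr rfl fun p hp => ?_
        simp only [Finset.mem_filter, Finset.mem_product, Finset.mem_range] at hp
        exact pairTerm_seg_full_turn f c hp.2 hp.1.2
    _ = ∑ p ∈ Finset.range n ×ˢ Finset.range n, chordTerm k s t N f (c + p.1) (c + p.2) :=
        (sum_product_self_eq_sum_lt _ (fun x y : ℕ => chordTerm k s t N f (c + x) (c + y))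
          fun _ => hdiag _).symm
    _ = ∑ z : ZMod n × ZMod n, chordTerm k s t N f z.1 z.2 := by
        rw [Finset.sum_product, Fintype.sum_prod_type, ← sum_range_add_natCast c]
        exact Finset.sum_congr rfl fun x _ =>
          sum_range_add_natCast c fun j => chordTerm k s t N f (c + x) j

lemma wordCobracket_rotate (a : Arr E) (l : List (Arr E)) :
    wordCobracket k s t N (a :: l) = wordCobracket k s t N (l ++ [a]) := by
  obtain ⟨f, hf⟩ := exists_seg_eq (n := l.length + 1) (l := a :: l) (List.length_cons ..)
  rw [seg_succ, List.cons.injEq] at hf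
  have hturn : (0 + 1 + l.length : ZMod (l.length + 1)) = 0 := by
    rw [zero_add]
    exact (add_comm _ _).trans ((Nat.cast_add_one _).symm.trans (ZMod.natCast_self _))
  have hlast : seg f (0 + 1) (l.length + 1) = l ++ [a] := by
    rw [seg_succ_last, hturn, hf.1, hf.2]
  rw [← hlast, wordCobracket_seg, ← wordCobracket_seg f 0, seg_succ, hf.1, hf.2]

/-! ### Iterating the cobracket -/

variable (k s t N f) in
/-- The summand of `(δ_or ⊗ Id) ∘ δ_or` obtained by cutting out first the arc of `z` and then that
of `w`, up to its sign and the order of its first two tensor factors. -/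
def tripleTerm (z w : ZMod n × ZMod n) : L ⊗[k] (L ⊗[k] L) :=
  (omg k (f z.1) (f z.2) * omg k (f w.1) (f w.2)) •
    (remainder s t N f z w ⊗ₜ[k] (arc s t N f w.1 w.2 ⊗ₜ[k] arc s t N f z.1 z.2))

variable (f) in
lemma wordCobracket_between {z : ZMod n × ZMod n} (hz : z.1 ≠ z.2) :
    wordCobracket k s t N (between f z.2 z.1) =
      ∑ w ∈ chordsFollowing z, omg k (f w.1) (f w.2) •
        (remainder s t N f z w ⊗ₜ[k] arc s t N f w.1 w.2 -
          arc s t N f w.1 w.2 ⊗ₜ[k] remainder s t N f z w) := by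
  have hlt : gap z.2 z.1 < n := ZMod.val_lt _
  rw [← Prod.mk.eta (p := z), ← sum_range_lt_eq_sum_chordsFollowing hz, wordCobracket,
    length_between]
  refine Finset.sum_congr rfl ?_
  rintro ⟨x, y⟩ hxy
  simp only [Finset.mem_filter, Finset.mem_product, Finset.mem_range] at hxy
  rw [between, pairTerm_seg f _ hxy.2 hxy.1.2 hlt.le, remainder, between, between,
    gap_add_one_add_left hxy.1.2, gap_self_add_one_add _ (hxy.1.1.trans hlt)]

lemma assoc_rTensor_chordTerm (hN : IsRotationInvariant s t N) {δ : L →ₗ[k] L ⊗[k] L}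
    (hδ : ∀ v l, IsPathFrom s t v l → pathTgt s t v l = v → δ (N v l) = wordCobracket k s t N l)
    (hf : IsCyclicPath s t f) (z : ZMod n × ZMod n) :
    TensorProduct.assoc k L L L (LinearMap.rTensor L δ (chordTerm k s t N f z.1 z.2)) =
      ∑ w ∈ chordsFollowing z,
        (tripleTerm k s t N f z w - tau123 k L (tripleTerm k s t N f w z)) := by
  by_cases hω : omg k (f z.1) (f z.2) = 0
  · simp [chordTerm, tripleTerm, hω]
  have hz : z.1 ≠ z.2 := fun h => hω (by rw [h, omg_self])
  have hδz : δ (arc s t N f z.2 z.1) = wordCobracket k s t N (between f z.2 z.1) :=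
    hδ _ _ (hf.isPathFrom_between _ _)
      ((hf.pathTgt_between _ _).trans (asrc_eq_atgt_of_omg_ne_zero hω))
  rw [chordTerm, map_smul, map_smul, LinearMap.rTensor_tmul, hδz, wordCobracket_between f hz,
    TensorProduct.sum_tmul, map_sum, Finset.smul_sum]
  refine Finset.sum_congr rfl fun w _ => ?_
  rw [tripleTerm, tripleTerm, map_smul, tau123_tmul, ← remainder_comm hN hf hω,
    mul_comm (omg k (f w.1) (f w.2)), ← smul_sub, mul_smul, ← TensorProduct.smul_tmul', map_smul,
    TensorProduct.sub_tmul, map_sub, TensorProduct.assoc_tmul, TensorProduct.assoc_tmul]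

lemma assoc_rTensor_wordCobracket_seg (hN : IsRotationInvariant s t N) {δ : L →ₗ[k] L ⊗[k] L}
    (hδ : ∀ v l, IsPathFrom s t v l → pathTgt s t v l = v → δ (N v l) = wordCobracket k s t N l)
    (hf : IsCyclicPath s t f) (c : ZMod n) :
    TensorProduct.assoc k L L L (LinearMap.rTensor L δ (wordCobracket k s t N (seg f c n))) =
      ∑ z, ∑ w ∈ chordsFollowing z, tripleTerm k s t N f z w -
        tau123 k L (∑ z, ∑ w ∈ chordsFollowing z, tripleTerm k s t N f z w) := by
  have hexchange : ∑ z, ∑ w ∈ chordsFollowing z, tripleTerm k s t N f z w =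
      ∑ z, ∑ w ∈ chordsFollowing z, tripleTerm k s t N f w z :=
    Finset.sum_comm' fun z w => by simp [mem_chordsFollowing_comm]
  nth_rewrite 2 [hexchange]
  simp only [wordCobracket_seg, map_sum, assoc_rTensor_chordTerm hN hδ hf, Finset.sum_sub_distrib]

theorem isLieCobracket_of_wordCobracket (hN : IsRotationInvariant s t N)
    {δ : L →ₗ[k] L ⊗[k] L}
    (hδ : ∀ v l, IsPathFrom s t v l → pathTgt s t v l = v → δ (N v l) = wordCobracket k s t N l)
    (hspan : Submodule.span k
      {x | ∃ v l, IsPathFrom s t v l ∧ pathTgt s t v l = v ∧ N v l = x} = ⊤) :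
    IsLieCobracket δ := by
  constructor <;> refine LinearMap.ext_on hspan ?_ <;> rintro _ ⟨v, l, hv, hc, rfl⟩
  · rw [LinearMap.comp_apply, LinearMap.neg_apply, hδ v l hv hc, tau2_wordCobracket]
  · simp only [leftIter, LinearMap.comp_apply, LinearMap.zero_apply, LinearEquiv.coe_coe,
      hδ v l hv hc]
    rcases eq_or_ne l [] with rfl | hl
    · simp [wordCobracket]
    · have : NeZero l.length := ⟨by simpa using hl⟩
      obtain ⟨f, hseg⟩ := exists_seg_eq (n := l.length) rfl
      rw [← hseg] at hv hc
      rw [← hseg, assoc_rTensor_wordCobracket_seg hN hδ (isCyclicPath_of_closed hv hc) 0]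
      exact cyclicSum_sub_tau123 _

end Cobracket

/-! ### The necklace module -/

lemma mkN_of_closed {v : I} {l : List (Arr E)} (h : IsPathFrom s t v l)
    (hv : pathTgt s t v l = v) :
    mkN k s t v l = Finsupp.single (Quot.mk (RotRel s t) ⟨⟨v, l, h⟩, hv⟩ : Necklace s t) 1 :=
  dif_pos ⟨h, hv⟩

lemma isRotationInvariant_mkN : IsRotationInvariant s t (mkN k s t) := by
  intro a l
  have hiff : (IsPathFrom s t (asrc s t a) (a :: l) ∧
      pathTgt s t (asrc s t a) (a :: l) = asrc s t a) ↔
      IsPathFrom s t (atgt s t a) (l ++ [a]) ∧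
        pathTgt s t (atgt s t a) (l ++ [a]) = atgt s t a := by
    simp [isPathFrom_append, pathTgt_append, IsPathFrom, pathTgt, eq_comm]
  by_cases h : IsPathFrom s t (asrc s t a) (a :: l) ∧
      pathTgt s t (asrc s t a) (a :: l) = asrc s t a
  · rw [mkN_of_closed k s t h.1 h.2, mkN_of_closed k s t (hiff.1 h).1 (hiff.1 h).2]
    exact congrArg (Finsupp.single · 1) (Quot.sound ⟨a, l, rfl, rfl, rfl⟩)
  · rw [mkN, mkN, dif_neg h, dif_neg (mt hiff.2 h)]

lemma span_mkN : Submodule.span k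
    {x | ∃ v l, IsPathFrom s t v l ∧ pathTgt s t v l = v ∧ mkN k s t v l = x} = ⊤ := by
  rw [eq_top_iff, ← Finsupp.basisSingleOne.span_eq, Finsupp.coe_basisSingleOne]
  refine Submodule.span_mono ?_
  rintro _ ⟨q, rfl⟩
  obtain ⟨⟨⟨v, l, hl⟩, hv⟩, rfl⟩ := Quot.exists_rep q
  exact ⟨v, l, hl, hv, mkN_of_closed k s t hl hv⟩

lemma dorTerm_eq_pairTerm (v : I) (l : List (Arr E)) (i j : ℕ) :
    dorTerm k s t v l i j = pairTerm k s t (mkN k s t) l i j := by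
  unfold dorTerm pairTerm
  split
  · rfl
  · exact zero_smul _ _

lemma deltaOr_single (q : Necklace s t) :
    deltaOr k s t (Finsupp.single q 1) =
      wordCobracket k s t (mkN k s t) q.out.path.arrows := by
  refine (Finsupp.sum_single_index ?_).trans ((one_smul k _).trans ?_)
  · exact zero_smul k _
  simp only [zero_smul, dorTerm_eq_pairTerm]
  exact (Finset.sum_product' _ _ _).symm.trans (Finset.sum_filter _ _).symm

lemma deltaOr_single_mk (p : ClosedQPath s t) :
    deltaOr k s t (Finsupp.single (Quot.mk (RotRel s t) p : Necklace s t) 1) =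
      wordCobracket k s t (mkN k s t) p.path.arrows := by
  have hrot (p q : ClosedQPath s t) (h : RotRel s t p q) :
      wordCobracket k s t (mkN k s t) p.path.arrows =
        wordCobracket k s t (mkN k s t) q.path.arrows := by
    obtain ⟨a, l, hp, hq, -⟩ := h
    rw [hp, hq, wordCobracket_rotate]
  exact (deltaOr_single k s t _).trans
    (congrArg (Quot.lift
      (fun p : ClosedQPath s t => wordCobracket k s t (mkN k s t) p.path.arrows) hrot)
      (Quot.out_eq (Quot.mk (RotRel s t) p)))

/-- `δ_or` is a Lie cobracket on `L`. -/
theorem deltaOr_isLieCobracket : IsLieCobracket (deltaOr k s t) := by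
  refine isLieCobracket_of_wordCobracket (isRotationInvariant_mkN k s t) ?_ (span_mkN k s t)
  intro v l hl hv
  rw [mkN_of_closed k s t hl hv]
  exact deltaOr_single_mk k s t _

end
end

section
/- Let Q be a quiver. The k-linear map δ_{p,rt} : Ch_rt → Ch_rt ⊗ Ch_rt defined by δ_{p,rt}((X,H)) = Σ_{c = (i,j) ∈ H} −ω(a_i, a_j) X_{c,1} ⊗ X_{c,2} is a (left) pre-Lie comultiplication, so (Ch_rt, δ_{p,rt}) is a pre-Lie coalgebra. -/
/-!
Statement 13: for a quiver `Q`, the chord algebra `Ch_rt` (the free `k`-module with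
basis the path chord diagrams `(X,H)`, `X` a path in the double quiver `Q̄` and `H` a cut
of `X`), equipped with `δ_{p,rt}((X,H)) = Σ_{c=(i,j)∈H} −ω(a_i,a_j) X_{c,1} ⊗ X_{c,2}`,
is a pre-Lie coalgebra.
-/

open TensorProduct

noncomputable section

section PreLie

variable (k : Type*) [CommRing k] (g : Type*) [AddCommGroup g] [Module k g]

/-- `τ_{(12)}` on the triple tensor product `g ⊗ (g ⊗ g)`: `x⊗y⊗z ↦ y⊗x⊗z`. -/
def tau12 : g ⊗[k] (g ⊗[k] g) →ₗ[k] g ⊗[k] (g ⊗[k] g) :=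
  (TensorProduct.assoc k g g g).toLinearMap ∘ₗ
    (LinearMap.rTensor g (TensorProduct.comm k g g).toLinearMap) ∘ₗ
    (TensorProduct.assoc k g g g).symm.toLinearMap

variable {k g}

/-- `δ₀ : g → g ⊗ g` is a (left) pre-Lie comultiplication if
`(Id − τ_{(12)}) ∘ (δ₀ ⊗ Id − Id ⊗ δ₀) ∘ δ₀ = 0`. -/
def IsPreLieComul (δ : g →ₗ[k] g ⊗[k] g) : Prop :=
  (LinearMap.id - tau12 k g) ∘ₗ
      (((TensorProduct.assoc k g g g).toLinearMap ∘ₗ LinearMap.rTensor g δ)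
        - LinearMap.lTensor g δ) ∘ₗ δ = 0

end PreLie

/-- The involution `a ↦ a*` on arrows of the double quiver (with `(e*)* = e`). -/
def astar {E : Type*} : Arr E → Arr E
  | .inl e => .inr e
  | .inr e => .inl e

/-! ### Cuts of paths -/

/-- A cut of a path with arrow list `l` (0-indexed): a set `H` of pairs `(i,j)` of
positions such that all the involved positions are distinct, `i < j` for each pair, the
pairs do not cross, and for each pair `{a_i, a_j} = {e, e*}` for some arrow `e ∈ Q`. -/
def IsCut {E : Type*} (l : List (Arr E)) (H : Finset (ℕ × ℕ)) : Prop :=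
  (∀ c ∈ H, c.1 < c.2 ∧ c.2 < l.length ∧
    ∃ e : E, (l[c.1]? = some (.inl e) ∧ l[c.2]? = some (.inr e)) ∨
             (l[c.1]? = some (.inr e) ∧ l[c.2]? = some (.inl e))) ∧
  (∀ c ∈ H, ∀ c' ∈ H, c ≠ c' →
    c.1 ≠ c'.1 ∧ c.1 ≠ c'.2 ∧ c.2 ≠ c'.1 ∧ c.2 ≠ c'.2) ∧
  ¬ ∃ c ∈ H, ∃ c' ∈ H, c.1 < c'.1 ∧ c'.1 < c.2 ∧ c.2 < c'.2

/-- No pair of a cut is nested inside another: together with `IsCut` this defines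
simple cuts of paths. -/
def NoNest (H : Finset (ℕ × ℕ)) : Prop :=
  ¬ ∃ c ∈ H, ∃ c' ∈ H, c.1 < c'.1 ∧ c'.2 < c.2

/-- A simple cut of a path: a cut in which no pair is nested inside another. -/
def IsSimpleCut {E : Type*} (l : List (Arr E)) (H : Finset (ℕ × ℕ)) : Prop :=
  IsCut l H ∧ NoNest H

/-- The sign `ε` contributed by one pair of a cut: `−ω(a_i, a_j)`. -/
def epsFactor (k : Type*) [CommRing k] {E : Type*} (l : List (Arr E)) (c : ℕ × ℕ) : k :=
  match l[c.1]?, l[c.2]? with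
  | some a, some b => -(omg k a b)
  | _, _ => 0

/-- The sign `ε_H = ∏_ℓ (−ω(a_{i_ℓ}, a_{j_ℓ}))` of a cut. -/
def epsH (k : Type*) [CommRing k] {E : Type*} (l : List (Arr E)) (H : Finset (ℕ × ℕ)) :
    k := ∏ c ∈ H, epsFactor k l c

/-- The chords of `H` lying strictly inside the chord `(i,j)`, reindexed along the path
`a_{i+1} ⋯ a_{j−1}`. -/
def insideCut (H : Finset (ℕ × ℕ)) (i j : ℕ) : Finset (ℕ × ℕ) :=
  (H.filter (fun c' => i < c'.1 ∧ c'.2 < j)).image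
    (fun c' => (c'.1 - (i+1), c'.2 - (i+1)))

/-- The chords of `H` other than `(i,j)` not lying inside the chord `(i,j)`, reindexed
along the path `a₁ ⋯ a_{i−1} a_{j+1} ⋯ a_n`. -/
def outsideCut (H : Finset (ℕ × ℕ)) (i j : ℕ) : Finset (ℕ × ℕ) :=
  ((H.erase (i, j)).filter (fun c' => ¬ (i < c'.1 ∧ c'.2 < j))).image
    (fun c' => (if j < c'.1 then c'.1 - (j - i + 1) else c'.1,
                if j < c'.2 then c'.2 - (j - i + 1) else c'.2))

variable (k : Type*) [CommRing k] {I E : Type*} (s t : E → I)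

/-- Path chord diagrams `(X, H)`: a path `X` in `Q̄` together with a cut `H` of `X`. -/
def PCD : Type _ := {x : QPath s t × Finset (ℕ × ℕ) // IsCut x.1.arrows x.2}

/-- The chord algebra `Ch_rt`: the free `k`-module with basis the path chord
diagrams. -/
abbrev ChRt := PCD s t →₀ k

open scoped Classical in
/-- The basis vector of a path chord diagram, or `0` if the data is not a path chord
diagram. -/
def mkCD (v : I) (l : List (Arr E)) (H : Finset (ℕ × ℕ)) : ChRt k s t :=
  if h : IsPathFrom s t v l ∧ IsCut l H then
    Finsupp.single ⟨(⟨v, l, h.1⟩, H), h.2⟩ (1 : k) else 0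

/-- The summand of `δ_{p,rt}` on `Ch_rt` corresponding to the chord `c = (i,j)`:
`−ω(a_i,a_j) X_{c,1} ⊗ X_{c,2}`, where `X_{c,1}` is the chord diagram on
`(a_i)_t a_{i+1}⋯a_{j−1}` with the chords nested inside `c` and `X_{c,2}` is the chord
diagram on `a₁⋯a_{i−1} (a_j)_t a_{j+1}⋯a_n` with the chords outside `c`. -/
def chTerm (x : PCD s t) (c : ℕ × ℕ) : ChRt k s t ⊗[k] ChRt k s t :=
  let v := x.1.1.src
  let l := x.1.1.arrows
  let H := x.1.2
  match l[c.1]?, l[c.2]? with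
  | some a, some b =>
      (-(omg k a b)) •
        (mkCD k s t (atgt s t a) ((l.drop (c.1+1)).take (c.2 - c.1 - 1))
            (insideCut H c.1 c.2) ⊗ₜ[k]
          mkCD k s t v (l.take c.1 ++ l.drop (c.2+1)) (outsideCut H c.1 c.2))
  | _, _ => (0 : k) • (mkCD k s t v [] ∅ ⊗ₜ[k] mkCD k s t v [] ∅)

/-- The pre-Lie comultiplication `δ_{p,rt}` on the chord algebra `Ch_rt`. -/
def deltaCh : ChRt k s t →ₗ[k] ChRt k s t ⊗[k] ChRt k s t :=
  Finsupp.lift (ChRt k s t ⊗[k] ChRt k s t) k (PCD s t) fun x =>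
    ∑ c ∈ x.1.2, chTerm k s t x c

/-!
Fix a diagram `(X, H)`. Every diagram arising from it by iterated cutting is the restriction `X_S`
of `(X, H)` to a set `S` of positions, so reindexing is needed only once, in the formula
`δ(X_S) = ∑_{c ∈ H, c ⊆ S} ε_c • X_{S ∩ (i, j)} ⊗ X_{S ∖ [i, j]}` with `c = (i, j)`; further cuts
are operations on `S`. In the coassociator a chord `d` nested in `c` contributes the same term to
both halves, because cutting along `d` and then along `c` leaves the same outer diagram as cutting
along `c` alone. What is left is a sum over ordered pairs `(c, d)` of disjoint chords, symmetric
under `τ_{(12)}` because the two removals commute.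
-/

section Restriction

open Finset

theorem sort_union_of_lt {α : Type*} [LinearOrder α] {S T : Finset α}
    (h : ∀ a ∈ S, ∀ b ∈ T, a < b) : (S ∪ T).sort = S.sort ++ T.sort := by
  have hST : Disjoint S T := disjoint_left.2 fun a ha ha' => (h a ha a ha').false
  refine List.Perm.eq_of_pairwise' (pairwise_sort _ _)
    (List.pairwise_append.2 ⟨pairwise_sort _ _, pairwise_sort _ _, fun a ha b hb => ?_⟩) ?_
  · exact (h a ((mem_sort _).1 ha) b ((mem_sort _).1 hb)).le
  · rw [List.perm_ext_iff_of_nodup (sort_nodup _ _)]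
    · simp
    · exact (sort_nodup _ _).append (sort_nodup _ _)
        fun a ha hb => disjoint_left.1 hST ((mem_sort _).1 ha) ((mem_sort _).1 hb)

/-- The number of elements of `S` below `p`. When `p ∈ S`, this is the 0-indexed position of `p` in
the increasing enumeration of `S`. -/
def rank {α : Type*} [LinearOrder α] (S : Finset α) (p : α) : ℕ := #{q ∈ S | q < p}

section Rank

variable {α : Type*} [LinearOrder α] {S : Finset α} {p q r : α}

theorem strictMonoOn_rank (S : Finset α) : StrictMonoOn (rank S) S := fun _ hp _ _ hpq =>
  card_lt_card <| Finset.ssubset_iff_subset_ne.2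
    ⟨monotone_filter_right S fun _ _ hr => hr.trans hpq, fun h =>
      (mem_filter.1 (h.ge (mem_filter.2 ⟨hp, hpq⟩))).2.false⟩

variable [LocallyFiniteOrder α]

theorem rank_eq_add_card (hp : p ∈ S) (hpq : p < q) :
    rank S q = rank S p + 1 + #(S ∩ Ioo p q) := by
  have h : ({r ∈ S | r < q} : Finset α) = insert p {r ∈ S | r < p} ∪ (S ∩ Ioo p q) := by
    grind
  rw [rank, h, card_union_of_disjoint, card_insert_of_notMem (by simp), rank]
  simp only [disjoint_left, mem_filter, mem_insert, mem_inter, mem_Ioo]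
  grind

theorem rank_inter_Ioo (hp : p ∈ S) (hr : r ∈ Ioo p q) :
    rank (S ∩ Ioo p q) r = rank S r - (rank S p + 1) := by
  have h : ({a ∈ S ∩ Ioo p q | a < r} : Finset α) = S ∩ Ioo p r := by
    grind
  rw [rank, h, rank_eq_add_card hp (mem_Ioo.1 hr).1, Nat.add_sub_cancel_left]

theorem rank_sdiff_Icc_of_lt (hr : r < p) : rank (S \ Icc p q) r = rank S r := by
  rw [rank, rank]
  congr 1
  grind

theorem rank_sdiff_Icc_of_gt (hp : p ∈ S) (hq : q ∈ S) (hpq : p < q) (hr : q < r) :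
    rank (S \ Icc p q) r = rank S r - (rank S q - rank S p + 1) := by
  have h : ({a ∈ S \ Icc p q | a < r} : Finset α) = {a ∈ S | a < p} ∪ (S ∩ Ioo q r) := by
    grind
  have hcard : rank (S \ Icc p q) r = rank S p + #(S ∩ Ioo q r) := by
    rw [rank, h, card_union_of_disjoint, rank]
    simp only [disjoint_left, mem_filter, mem_inter, mem_Ioo]
    grind
  have := rank_eq_add_card hp hpq
  have := rank_eq_add_card hq hr
  omega

end Rank

/-- The sublist of `l` consisting of the entries at the positions in `S`. Positions beyond the end
of `l` are ignored. -/
def entriesOn {α : Type*} (l : List α) (S : Finset ℕ) : List α := S.sort.filterMap (l[·]?)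

section Entries

variable {α : Type*} {l : List α} {S T : Finset ℕ} {p q : ℕ}

theorem entriesOn_range_length (l : List α) : entriesOn l (range l.length) = l := by
  rw [entriesOn, sort_range]
  induction l with
  | nil => rfl
  | cons a l ih =>
    simpa [List.range_succ_eq_map, List.filterMap_map, Function.comp_def] using ih

theorem entriesOn_union_of_lt (h : ∀ a ∈ S, ∀ b ∈ T, a < b) :
    entriesOn l (S ∪ T) = entriesOn l S ++ entriesOn l T := by
  rw [entriesOn, sort_union_of_lt h, List.filterMap_append, entriesOn, entriesOn]

theorem length_entriesOn (hS : S ⊆ range l.length) : (entriesOn l S).length = #S := by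
  rw [entriesOn, List.filterMap_length_eq_length.2, length_sort]
  intro n hn
  simpa using hS ((mem_sort _).1 hn)

theorem length_entriesOn_filter_lt (hS : S ⊆ range l.length) (p : ℕ) :
    (entriesOn l {r ∈ S | r < p}).length = rank S p :=
  length_entriesOn ((filter_subset _ _).trans hS)

theorem entriesOn_eq_append_cons (hp : p ∈ S) {a : α} (ha : l[p]? = some a) :
    entriesOn l S = entriesOn l {r ∈ S | r < p} ++ a :: entriesOn l {r ∈ S | p < r} := by
  have h : S = {r ∈ S | r < p} ∪ ({p} ∪ {r ∈ S | p < r}) := by grind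
  conv_lhs => rw [h]
  rw [entriesOn_union_of_lt (by grind), entriesOn_union_of_lt (by grind), ← List.singleton_append]
  simp [entriesOn, ha]

theorem getElem?_entriesOn_rank (hS : S ⊆ range l.length) (hp : p ∈ S) :
    (entriesOn l S)[rank S p]? = l[p]? := by
  have ha := List.getElem?_eq_getElem (mem_range.1 (hS hp))
  rw [entriesOn_eq_append_cons hp ha, ← length_entriesOn_filter_lt hS p, ha]
  simp

theorem entriesOn_eq_append_cons_append_cons (hp : p ∈ S) (hq : q ∈ S) (hpq : p < q) {a b : α}
    (ha : l[p]? = some a) (hb : l[q]? = some b) :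
    entriesOn l S = entriesOn l {r ∈ S | r < p} ++
      a :: (entriesOn l (S ∩ Ioo p q) ++ b :: entriesOn l {r ∈ S | q < r}) := by
  have hIoo : {r ∈ {r ∈ S | p < r} | r < q} = S ∩ Ioo p q := by grind
  have hIoi : {r ∈ {r ∈ S | p < r} | q < r} = {r ∈ S | q < r} := by grind
  rw [entriesOn_eq_append_cons hp ha,
    entriesOn_eq_append_cons (mem_filter.2 ⟨hq, hpq⟩) hb, hIoo, hIoi]

theorem entriesOn_sdiff_Icc (hpq : p ≤ q) : entriesOn l (S \ Icc p q) =
    entriesOn l {r ∈ S | r < p} ++ entriesOn l {r ∈ S | q < r} := by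
  rw [← entriesOn_union_of_lt (by grind)]
  congr 1
  grind

theorem take_drop_entriesOn (hS : S ⊆ range l.length) (hp : p ∈ S) (hq : q ∈ S) (hpq : p < q) :
    ((entriesOn l S).drop (rank S p + 1)).take (rank S q - rank S p - 1) =
      entriesOn l (S ∩ Ioo p q) := by
  have ha := List.getElem?_eq_getElem (mem_range.1 (hS hp))
  have hb := List.getElem?_eq_getElem (mem_range.1 (hS hq))
  have hlen : rank S q - rank S p - 1 = (entriesOn l (S ∩ Ioo p q)).length := by
    rw [length_entriesOn (inter_subset_left.trans hS), rank_eq_add_card hp hpq]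
    omega
  rw [entriesOn_eq_append_cons_append_cons hp hq hpq ha hb, hlen,
    ← length_entriesOn_filter_lt hS p]
  simp

theorem take_append_drop_entriesOn (hS : S ⊆ range l.length) (hp : p ∈ S) (hq : q ∈ S)
    (hpq : p < q) :
    (entriesOn l S).take (rank S p) ++ (entriesOn l S).drop (rank S q + 1) =
      entriesOn l (S \ Icc p q) := by
  have hb := List.getElem?_eq_getElem (mem_range.1 (hS hq))
  have htake : (entriesOn l S).take (rank S p) = entriesOn l {r ∈ S | r < p} := by
    have ha := List.getElem?_eq_getElem (mem_range.1 (hS hp))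
    rw [entriesOn_eq_append_cons hp ha, ← length_entriesOn_filter_lt hS p, List.take_left]
  have hdrop : (entriesOn l S).drop (rank S q + 1) = entriesOn l {r ∈ S | q < r} := by
    rw [entriesOn_eq_append_cons hq hb, ← length_entriesOn_filter_lt hS q]
    simp
  rw [htake, hdrop, entriesOn_sdiff_Icc hpq.le]

end Entries

end Restriction

section Path

variable {s t} {v : I} {l A B C : List (Arr E)} {a : Arr E}

theorem atgt_astar (a : Arr E) : atgt s t (astar a) = asrc s t a := by
  cases a <;> rfl

theorem isPathFrom_append_s13 :
    IsPathFrom s t v (A ++ B) ↔ IsPathFrom s t v A ∧ IsPathFrom s t (pathTgt s t v A) B := by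
  induction A generalizing v with
  | nil => simp [IsPathFrom, pathTgt]
  | cons a A ih => simp [IsPathFrom, pathTgt, ih, and_assoc]

theorem pathTgt_append_singleton : pathTgt s t v (A ++ [a]) = atgt s t a := by
  induction A generalizing v with
  | nil => rfl
  | cons b _ ih => exact ih

theorem pathTgt_take_add_one {n : ℕ} (ha : l[n]? = some a) :
    pathTgt s t v (l.take (n + 1)) = atgt s t a := by
  rw [List.take_add_one, ha]
  exact pathTgt_append_singleton

theorem IsPathFrom.of_cut (h : IsPathFrom s t v (A ++ a :: (B ++ astar a :: C))) :
    IsPathFrom s t (atgt s t a) B ∧ IsPathFrom s t v (A ++ C) := by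
  simp only [isPathFrom_append_s13, IsPathFrom, atgt_astar] at h ⊢
  obtain ⟨hA, ha, hB, -, hC⟩ := h
  exact ⟨hB, hA, ha ▸ hC⟩

end Path

section Cut

open Finset

/-- The chords of `H` with both ends in `S`. -/
def chordsIn (H : Finset (ℕ × ℕ)) (S : Finset ℕ) : Finset (ℕ × ℕ) := {c ∈ H | c.1 ∈ S ∧ c.2 ∈ S}

/-- The chords of `H` with both ends in `S`, reindexed along the restriction `entriesOn l S` of
the underlying path. -/
def chordsOn (H : Finset (ℕ × ℕ)) (S : Finset ℕ) : Finset (ℕ × ℕ) :=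
  (chordsIn H S).image (Prod.map (rank S) (rank S))

variable {l : List (Arr E)} {H : Finset (ℕ × ℕ)} {S : Finset ℕ} {c d : ℕ × ℕ}

theorem mem_chordsIn : c ∈ chordsIn H S ↔ c ∈ H ∧ c.1 ∈ S ∧ c.2 ∈ S := mem_filter

theorem injOn_map_rank_chordsIn :
    Set.InjOn (Prod.map (rank S) (rank S)) (chordsIn H S) :=
  ((strictMonoOn_rank S).injOn.prodMap (strictMonoOn_rank S).injOn).mono
    fun _ hc => (mem_chordsIn.1 hc).2

namespace IsCut

theorem fst_lt_snd (h : IsCut l H) (hc : c ∈ H) : c.1 < c.2 := (h.1 c hc).1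

theorem snd_lt_length (h : IsCut l H) (hc : c ∈ H) : c.2 < l.length := (h.1 c hc).2.1

theorem exists_getElem? (h : IsCut l H) (hc : c ∈ H) :
    ∃ a, l[c.1]? = some a ∧ l[c.2]? = some (astar a) := by
  obtain ⟨-, -, e, he | he⟩ := h.1 c hc
  exacts [⟨_, he⟩, ⟨_, he⟩]

theorem nested_or_disjoint (h : IsCut l H) (hc : c ∈ H) (hd : d ∈ H) (hne : c ≠ d) :
    (c.1 < d.1 ∧ d.2 < c.2) ∨ (d.1 < c.1 ∧ c.2 < d.2) ∨ c.2 < d.1 ∨ d.2 < c.1 := by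
  have := h.fst_lt_snd hc
  have := h.fst_lt_snd hd
  have hdistinct := h.2.1 c hc d hd hne
  have hcd : ¬(c.1 < d.1 ∧ d.1 < c.2 ∧ c.2 < d.2) := fun hcross => h.2.2 ⟨c, hc, d, hd, hcross⟩
  have hdc : ¬(d.1 < c.1 ∧ c.1 < d.2 ∧ d.2 < c.2) := fun hcross => h.2.2 ⟨d, hd, c, hc, hcross⟩
  omega

theorem restrict (h : IsCut l H) (hS : S ⊆ range l.length) :
    IsCut (entriesOn l S) (chordsOn H S) := by
  have hlt {p q : ℕ} (hp : p ∈ S) (hq : q ∈ S) : rank S p < rank S q ↔ p < q :=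
    (strictMonoOn_rank S).lt_iff_lt hp hq
  have hne {p q : ℕ} (hp : p ∈ S) (hq : q ∈ S) (hpq : p ≠ q) : rank S p ≠ rank S q :=
    (strictMonoOn_rank S).injOn.ne hp hq hpq
  unfold IsCut chordsOn
  simp only [forall_mem_image, exists_mem_image, mem_chordsIn, Prod.map_fst, Prod.map_snd]
  refine ⟨?_, ?_, ?_⟩
  · rintro c ⟨hc, hc₁, hc₂⟩
    obtain ⟨hlt', -, hopp⟩ := h.1 c hc
    rw [getElem?_entriesOn_rank hS hc₁, getElem?_entriesOn_rank hS hc₂]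
    refine ⟨(hlt hc₁ hc₂).2 hlt', ?_, hopp⟩
    rw [length_entriesOn hS]
    exact card_lt_card (filter_ssubset.2 ⟨c.2, hc₂, lt_irrefl _⟩)
  · rintro c ⟨hc, hc₁, hc₂⟩ d ⟨hd, hd₁, hd₂⟩ hcd
    obtain ⟨h₁₁, h₁₂, h₂₁, h₂₂⟩ := h.2.1 c hc d hd (ne_of_apply_ne _ hcd)
    exact ⟨hne hc₁ hd₁ h₁₁, hne hc₁ hd₂ h₁₂, hne hc₂ hd₁ h₂₁, hne hc₂ hd₂ h₂₂⟩
  · rintro ⟨c, ⟨hc, hc₁, hc₂⟩, d, ⟨hd, hd₁, hd₂⟩, hcross⟩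
    rw [hlt hc₁ hd₁, hlt hd₁ hc₂, hlt hc₂ hd₂] at hcross
    exact h.2.2 ⟨c, hc, d, hd, hcross⟩

theorem chordsIn_range_length (h : IsCut l H) : chordsIn H (range l.length) = H :=
  filter_true_of_mem fun c hc => by
    have := h.fst_lt_snd hc
    have := h.snd_lt_length hc
    simp only [mem_range]
    omega

theorem chordsOn_range_length (h : IsCut l H) : chordsOn H (range l.length) = H := by
  have hrank {n : ℕ} (hn : n ∈ range l.length) : rank (range l.length) n = n := by
    rw [rank, ← card_range n]
    congr 1
    grind
  rw [chordsOn]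
  conv_rhs => rw [← h.chordsIn_range_length, ← image_id (s := chordsIn H (range l.length))]
  refine image_congr fun c hc => ?_
  obtain ⟨-, hc₁, hc₂⟩ := mem_chordsIn.1 hc
  exact Prod.ext (hrank hc₁) (hrank hc₂)

theorem chordsIn_inter_Ioo (h : IsCut l H) : chordsIn H (S ∩ Ioo c.1 c.2) =
    {d ∈ chordsIn H S | c.1 < d.1 ∧ d.2 < c.2} := by
  ext d
  simp only [mem_chordsIn, mem_filter, mem_inter, mem_Ioo]
  refine ⟨by tauto, fun ⟨⟨hd, hd₁, hd₂⟩, hlt₁, hlt₂⟩ => ?_⟩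
  have hlt := h.fst_lt_snd hd
  exact ⟨hd, ⟨hd₁, hlt₁, hlt.trans hlt₂⟩, hd₂, hlt₁.trans hlt, hlt₂⟩

theorem chordsIn_sdiff_Icc (h : IsCut l H) (hc : c ∈ H) : chordsIn H (S \ Icc c.1 c.2) =
    {d ∈ chordsIn H S | d ≠ c ∧ ¬(c.1 < d.1 ∧ d.2 < c.2)} := by
  have hlt := h.fst_lt_snd hc
  ext d
  by_cases hd : d ∈ H
  · have := h.fst_lt_snd hd
    have := h.nested_or_disjoint hc hd
    simp only [mem_chordsIn, mem_filter, mem_sdiff, mem_Icc]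
    grind
  · simp [mem_chordsIn, hd]

theorem chordsIn_sdiff_Icc_eq_union (h : IsCut l H) (hc : c ∈ H) :
    chordsIn H (S \ Icc c.1 c.2) = {d ∈ chordsIn H S | d.1 < c.1 ∧ c.2 < d.2} ∪
      {d ∈ chordsIn H S | c.2 < d.1 ∨ d.2 < c.1} := by
  have hlt := h.fst_lt_snd hc
  ext d
  by_cases hd : d ∈ H
  · have := h.fst_lt_snd hd
    have := h.nested_or_disjoint hc hd
    simp only [mem_chordsIn, mem_filter, mem_sdiff, mem_Icc, mem_union]
    grind
  · simp [mem_chordsIn, hd]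

theorem insideCut_chordsOn (h : IsCut l H) (hc : c ∈ chordsIn H S) :
    insideCut (chordsOn H S) (rank S c.1) (rank S c.2) =
      chordsOn H (S ∩ Ioo c.1 c.2) := by
  obtain ⟨-, hc₁, hc₂⟩ := mem_chordsIn.1 hc
  have hlt {p q : ℕ} (hp : p ∈ S) (hq : q ∈ S) : rank S p < rank S q ↔ p < q :=
    (strictMonoOn_rank S).lt_iff_lt hp hq
  have hfilter : {d ∈ chordsIn H S | rank S c.1 < rank S d.1 ∧ rank S d.2 < rank S c.2} =
      chordsIn H (S ∩ Ioo c.1 c.2) := by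
    rw [h.chordsIn_inter_Ioo]
    refine filter_congr fun d hd => ?_
    obtain ⟨-, hd₁, hd₂⟩ := mem_chordsIn.1 hd
    rw [hlt hc₁ hd₁, hlt hd₂ hc₂]
  rw [insideCut, chordsOn, filter_image, image_image]
  simp only [Prod.map_fst, Prod.map_snd]
  rw [hfilter]
  refine image_congr fun d hd => ?_
  obtain ⟨-, hd₁, hd₂⟩ := mem_chordsIn.1 hd
  exact Prod.ext (rank_inter_Ioo hc₁ (mem_inter.1 hd₁).2).symm
    (rank_inter_Ioo hc₁ (mem_inter.1 hd₂).2).symm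

theorem outsideCut_chordsOn (h : IsCut l H) (hc : c ∈ chordsIn H S) :
    outsideCut (chordsOn H S) (rank S c.1) (rank S c.2) =
      chordsOn H (S \ Icc c.1 c.2) := by
  obtain ⟨hcH, hc₁, hc₂⟩ := mem_chordsIn.1 hc
  have hcc := h.fst_lt_snd hcH
  have hlt {p q : ℕ} (hp : p ∈ S) (hq : q ∈ S) : rank S p < rank S q ↔ p < q :=
    (strictMonoOn_rank S).lt_iff_lt hp hq
  have hfilter : {d ∈ chordsIn H S | Prod.map (rank S) (rank S) d ≠ (rank S c.1, rank S c.2) ∧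
      ¬(rank S c.1 < rank S d.1 ∧ rank S d.2 < rank S c.2)} = chordsIn H (S \ Icc c.1 c.2) := by
    rw [h.chordsIn_sdiff_Icc hcH]
    refine filter_congr fun d hd => ?_
    obtain ⟨-, hd₁, hd₂⟩ := mem_chordsIn.1 hd
    rw [hlt hc₁ hd₁, hlt hd₂ hc₂]
    exact and_congr_left fun _ => (injOn_map_rank_chordsIn.eq_iff hd hc).not
  have hreindex {p : ℕ} (hp : p ∈ S \ Icc c.1 c.2) :
      (if rank S c.2 < rank S p then rank S p - (rank S c.2 - rank S c.1 + 1) else rank S p) =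
        rank (S \ Icc c.1 c.2) p := by
    obtain ⟨hpS, hpc⟩ := mem_sdiff.1 hp
    simp only [hlt hc₂ hpS]
    split_ifs with hgt
    · exact (rank_sdiff_Icc_of_gt hc₁ hc₂ hcc hgt).symm
    · exact (rank_sdiff_Icc_of_lt (by grind)).symm
  rw [outsideCut, ← filter_ne', filter_filter, chordsOn, filter_image, image_image]
  simp only [Prod.map_fst, Prod.map_snd]
  rw [hfilter]
  refine image_congr fun d hd => ?_
  obtain ⟨-, hd₁, hd₂⟩ := mem_chordsIn.1 hd
  exact Prod.ext (hreindex hd₁) (hreindex hd₂)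

end IsCut

end Cut

section Coassociator

variable {k} {g : Type*} [AddCommGroup g] [Module k g]

/-- The coassociator `(δ ⊗ Id − Id ⊗ δ) ∘ δ` of a comultiplication, whose symmetry in the first two
tensor factors is the pre-Lie condition. -/
def coassociator (δ : g →ₗ[k] g ⊗[k] g) : g →ₗ[k] g ⊗[k] (g ⊗[k] g) :=
  (((TensorProduct.assoc k g g g).toLinearMap ∘ₗ LinearMap.rTensor g δ)
    - LinearMap.lTensor g δ) ∘ₗ δ

theorem coassociator_apply (δ : g →ₗ[k] g ⊗[k] g) (x : g) : coassociator δ x =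
    TensorProduct.assoc k g g g (LinearMap.rTensor g δ (δ x)) - LinearMap.lTensor g δ (δ x) := rfl

theorem tau12_tmul (x y z : g) : tau12 k g (x ⊗ₜ[k] (y ⊗ₜ[k] z)) = y ⊗ₜ[k] (x ⊗ₜ[k] z) := rfl

theorem isPreLieComul_iff_of_basis {ι : Type*} (b : Module.Basis ι k g)
    {δ : g →ₗ[k] g ⊗[k] g} :
    IsPreLieComul δ ↔ ∀ i, tau12 k g (coassociator δ (b i)) = coassociator δ (b i) := by
  have hcomp : IsPreLieComul δ ↔ tau12 k g ∘ₗ coassociator δ = coassociator δ := by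
    rw [eq_comm, ← sub_eq_zero]
    exact Iff.rfl
  exact hcomp.trans ⟨fun h i => LinearMap.congr_fun h (b i), fun h => b.ext h⟩

end Coassociator

section Subdiagram

open Finset

variable {s t}

/-- The target of the arrow at position `p` of the path underlying `x`. -/
def tgtAt (x : PCD s t) (p : ℕ) : I := pathTgt s t x.1.1.src (x.1.1.arrows.take (p + 1))

/-- The restriction of the diagram `x` to the positions in `S`, with source `w`. The source is
data because it cannot be read off from an empty list of arrows. -/
def subdiagram (x : PCD s t) (w : I) (S : Finset ℕ) : ChRt k s t :=
  mkCD k s t w (entriesOn x.1.1.arrows S) (chordsOn x.1.2 S)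

variable {k} {x : PCD s t} {w : I} {S : Finset ℕ} {c d : ℕ × ℕ}

theorem subdiagram_range_length (x : PCD s t) :
    subdiagram k x x.1.1.src (range x.1.1.arrows.length) = Finsupp.single x 1 := by
  rw [subdiagram, entriesOn_range_length, x.2.chordsOn_range_length]
  exact dif_pos ⟨x.1.1.valid, x.2⟩

theorem isPathFrom_inter_Ioo_and_sdiff_Icc (hw : IsPathFrom s t w (entriesOn x.1.1.arrows S))
    (hc : c ∈ chordsIn x.1.2 S) :
    IsPathFrom s t (tgtAt x c.1) (entriesOn x.1.1.arrows (S ∩ Ioo c.1 c.2)) ∧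
      IsPathFrom s t w (entriesOn x.1.1.arrows (S \ Icc c.1 c.2)) := by
  obtain ⟨hcH, hc₁, hc₂⟩ := mem_chordsIn.1 hc
  obtain ⟨a, ha, hb⟩ := x.2.exists_getElem? hcH
  have hlt := x.2.fst_lt_snd hcH
  rw [entriesOn_eq_append_cons_append_cons hc₁ hc₂ hlt ha hb] at hw
  rw [tgtAt, pathTgt_take_add_one ha, entriesOn_sdiff_Icc hlt.le]
  exact hw.of_cut

theorem deltaCh_single (x : PCD s t) :
    deltaCh k s t (Finsupp.single x 1) = ∑ c ∈ x.1.2, chTerm k s t x c := by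
  rw [deltaCh, Finsupp.lift_apply]
  refine (Finsupp.sum_single_index ?_).trans ?_
  · exact zero_smul k _
  · exact one_smul k _

theorem chTerm_eq_smul_tmul {a b : Arr E} (ha : x.1.1.arrows[c.1]? = some a)
    (hb : x.1.1.arrows[c.2]? = some b) :
    chTerm k s t x c = epsFactor k x.1.1.arrows c •
      (mkCD k s t (atgt s t a) ((x.1.1.arrows.drop (c.1 + 1)).take (c.2 - c.1 - 1))
          (insideCut x.1.2 c.1 c.2) ⊗ₜ[k]
        mkCD k s t x.1.1.src (x.1.1.arrows.take c.1 ++ x.1.1.arrows.drop (c.2 + 1))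
          (outsideCut x.1.2 c.1 c.2)) := by
  simp only [chTerm, epsFactor, ha, hb]

theorem deltaCh_subdiagram (hS : S ⊆ range x.1.1.arrows.length)
    (hw : IsPathFrom s t w (entriesOn x.1.1.arrows S)) :
    deltaCh k s t (subdiagram k x w S) = ∑ c ∈ chordsIn x.1.2 S, epsFactor k x.1.1.arrows c •
      (subdiagram k x (tgtAt x c.1) (S ∩ Ioo c.1 c.2) ⊗ₜ[k]
        subdiagram k x w (S \ Icc c.1 c.2)) := by
  let y : PCD s t := ⟨(⟨w, entriesOn x.1.1.arrows S, hw⟩, chordsOn x.1.2 S), x.2.restrict hS⟩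
  have hy : subdiagram k x w S = Finsupp.single y 1 := dif_pos ⟨hw, x.2.restrict hS⟩
  rw [hy, deltaCh_single]
  refine (sum_image injOn_map_rank_chordsIn).trans (sum_congr rfl fun c hc => ?_)
  obtain ⟨hcH, hc₁, hc₂⟩ := mem_chordsIn.1 hc
  obtain ⟨a, ha, hb⟩ := x.2.exists_getElem? hcH
  have hlt := x.2.fst_lt_snd hcH
  have hget₁ := getElem?_entriesOn_rank hS hc₁
  have hget₂ := getElem?_entriesOn_rank hS hc₂
  have heps : epsFactor k y.1.1.arrows (Prod.map (rank S) (rank S) c) =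
      epsFactor k x.1.1.arrows c := by
    simp only [epsFactor, y, Prod.map_fst, Prod.map_snd, hget₁, hget₂]
  rw [chTerm_eq_smul_tmul (hget₁.trans ha) (hget₂.trans hb), heps]
  simp only [y, Prod.map_fst, Prod.map_snd]
  rw [take_drop_entriesOn hS hc₁ hc₂ hlt, take_append_drop_entriesOn hS hc₁ hc₂ hlt,
    x.2.insideCut_chordsOn hc, x.2.outsideCut_chordsOn hc, ← pathTgt_take_add_one ha]
  rfl

theorem deltaCh_subdiagram_inter_Ioo (hS : S ⊆ range x.1.1.arrows.length)
    (hw : IsPathFrom s t w (entriesOn x.1.1.arrows S)) (hc : c ∈ chordsIn x.1.2 S) :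
    deltaCh k s t (subdiagram k x (tgtAt x c.1) (S ∩ Ioo c.1 c.2)) =
      ∑ d ∈ chordsIn x.1.2 S with c.1 < d.1 ∧ d.2 < c.2, epsFactor k x.1.1.arrows d •
        (subdiagram k x (tgtAt x d.1) (S ∩ Ioo d.1 d.2) ⊗ₜ[k]
          subdiagram k x (tgtAt x c.1) ((S ∩ Ioo c.1 c.2) \ Icc d.1 d.2)) := by
  rw [deltaCh_subdiagram (inter_subset_left.trans hS)
    (isPathFrom_inter_Ioo_and_sdiff_Icc hw hc).1, x.2.chordsIn_inter_Ioo]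
  refine sum_congr rfl fun d hd => ?_
  have hsub := (mem_filter.1 hd).2
  have hinner : S ∩ Ioo c.1 c.2 ∩ Ioo d.1 d.2 = S ∩ Ioo d.1 d.2 := by grind
  rw [hinner]

theorem deltaCh_subdiagram_sdiff_Icc (hS : S ⊆ range x.1.1.arrows.length)
    (hw : IsPathFrom s t w (entriesOn x.1.1.arrows S)) (hc : c ∈ chordsIn x.1.2 S) :
    deltaCh k s t (subdiagram k x w (S \ Icc c.1 c.2)) =
      ∑ d ∈ chordsIn x.1.2 S with d.1 < c.1 ∧ c.2 < d.2, epsFactor k x.1.1.arrows d •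
        (subdiagram k x (tgtAt x d.1) ((S ∩ Ioo d.1 d.2) \ Icc c.1 c.2) ⊗ₜ[k]
          subdiagram k x w (S \ Icc d.1 d.2)) +
      ∑ d ∈ chordsIn x.1.2 S with c.2 < d.1 ∨ d.2 < c.1, epsFactor k x.1.1.arrows d •
        (subdiagram k x (tgtAt x d.1) (S ∩ Ioo d.1 d.2) ⊗ₜ[k]
          subdiagram k x w ((S \ Icc c.1 c.2) \ Icc d.1 d.2)) := by
  have hcH := (mem_chordsIn.1 hc).1
  have hlt := x.2.fst_lt_snd hcH
  rw [deltaCh_subdiagram (sdiff_subset.trans hS) (isPathFrom_inter_Ioo_and_sdiff_Icc hw hc).2,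
    x.2.chordsIn_sdiff_Icc_eq_union hcH, sum_union]
  · congr 1 <;> refine sum_congr rfl fun d hd => ?_
    · have hsup := (mem_filter.1 hd).2
      have hinner : (S \ Icc c.1 c.2) ∩ Ioo d.1 d.2 = (S ∩ Ioo d.1 d.2) \ Icc c.1 c.2 := by grind
      have houter : (S \ Icc c.1 c.2) \ Icc d.1 d.2 = S \ Icc d.1 d.2 := by grind
      rw [hinner, houter]
    · have hapart := (mem_filter.1 hd).2
      have hinner : (S \ Icc c.1 c.2) ∩ Ioo d.1 d.2 = S ∩ Ioo d.1 d.2 := by grind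
      rw [hinner]
  · refine disjoint_filter.2 fun d hd => ?_
    have := x.2.fst_lt_snd (mem_chordsIn.1 hd).1
    omega

variable (k) in
/-- The contribution of the pairs of disjoint chords to the coassociator of `deltaCh`, up to
sign. -/
def disjointChordSum (x : PCD s t) (w : I) (S : Finset ℕ) :
    ChRt k s t ⊗[k] (ChRt k s t ⊗[k] ChRt k s t) :=
  ∑ c ∈ chordsIn x.1.2 S, ∑ d ∈ chordsIn x.1.2 S with c.2 < d.1 ∨ d.2 < c.1,
    (epsFactor k x.1.1.arrows c * epsFactor k x.1.1.arrows d) •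
      (subdiagram k x (tgtAt x c.1) (S ∩ Ioo c.1 c.2) ⊗ₜ[k]
        (subdiagram k x (tgtAt x d.1) (S ∩ Ioo d.1 d.2) ⊗ₜ[k]
          subdiagram k x w ((S \ Icc c.1 c.2) \ Icc d.1 d.2)))

theorem tau12_disjointChordSum (x : PCD s t) (w : I) (S : Finset ℕ) :
    tau12 k (ChRt k s t) (disjointChordSum k x w S) = disjointChordSum k x w S := by
  simp only [disjointChordSum, map_sum, map_smul, tau12_tmul]
  rw [sum_comm' (t' := chordsIn x.1.2 S)
    (s' := fun d => {c ∈ chordsIn x.1.2 S | d.2 < c.1 ∨ c.2 < d.1}) (by grind)]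
  refine sum_congr rfl fun d _ => sum_congr rfl fun c _ => ?_
  rw [mul_comm, sdiff_right_comm]

variable (k) in
/-- The contribution of the pairs of nested chords to either half of the coassociator of
`deltaCh`. -/
def nestedChordSum (x : PCD s t) (w : I) (S : Finset ℕ) :
    ChRt k s t ⊗[k] (ChRt k s t ⊗[k] ChRt k s t) :=
  ∑ c ∈ chordsIn x.1.2 S, ∑ d ∈ chordsIn x.1.2 S with c.1 < d.1 ∧ d.2 < c.2,
    (epsFactor k x.1.1.arrows c * epsFactor k x.1.1.arrows d) •
      (subdiagram k x (tgtAt x d.1) (S ∩ Ioo d.1 d.2) ⊗ₜ[k]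
        (subdiagram k x (tgtAt x c.1) ((S ∩ Ioo c.1 c.2) \ Icc d.1 d.2) ⊗ₜ[k]
          subdiagram k x w (S \ Icc c.1 c.2)))

theorem assoc_rTensor_deltaCh_subdiagram (hS : S ⊆ range x.1.1.arrows.length)
    (hw : IsPathFrom s t w (entriesOn x.1.1.arrows S)) :
    TensorProduct.assoc k _ _ _ (LinearMap.rTensor (ChRt k s t) (deltaCh k s t)
      (deltaCh k s t (subdiagram k x w S))) = nestedChordSum k x w S := by
  rw [deltaCh_subdiagram hS hw, map_sum, map_sum]
  refine sum_congr rfl fun c hc => ?_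
  simp only [map_smul, LinearMap.rTensor_tmul, deltaCh_subdiagram_inter_Ioo hS hw hc,
    TensorProduct.sum_tmul, map_sum, TensorProduct.smul_tmul', TensorProduct.assoc_tmul,
    smul_sum, mul_smul]

theorem lTensor_deltaCh_subdiagram (hS : S ⊆ range x.1.1.arrows.length)
    (hw : IsPathFrom s t w (entriesOn x.1.1.arrows S)) :
    LinearMap.lTensor (ChRt k s t) (deltaCh k s t) (deltaCh k s t (subdiagram k x w S)) =
      nestedChordSum k x w S + disjointChordSum k x w S := by
  have hswap : nestedChordSum k x w S = ∑ c ∈ chordsIn x.1.2 S,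
      ∑ d ∈ chordsIn x.1.2 S with d.1 < c.1 ∧ c.2 < d.2,
        (epsFactor k x.1.1.arrows c * epsFactor k x.1.1.arrows d) •
          (subdiagram k x (tgtAt x c.1) (S ∩ Ioo c.1 c.2) ⊗ₜ[k]
            (subdiagram k x (tgtAt x d.1) ((S ∩ Ioo d.1 d.2) \ Icc c.1 c.2) ⊗ₜ[k]
              subdiagram k x w (S \ Icc d.1 d.2))) := by
    rw [nestedChordSum, sum_comm' (t' := chordsIn x.1.2 S)
      (s' := fun d => {c ∈ chordsIn x.1.2 S | c.1 < d.1 ∧ d.2 < c.2}) (by grind)]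
    simp only [mul_comm]
  rw [hswap, disjointChordSum, ← sum_add_distrib, deltaCh_subdiagram hS hw, map_sum]
  refine sum_congr rfl fun c hc => ?_
  simp only [map_smul, LinearMap.lTensor_tmul, deltaCh_subdiagram_sdiff_Icc hS hw hc,
    TensorProduct.tmul_add, TensorProduct.tmul_sum, TensorProduct.tmul_smul, smul_add, smul_sum,
    mul_smul]

theorem coassociator_deltaCh_subdiagram (hS : S ⊆ range x.1.1.arrows.length)
    (hw : IsPathFrom s t w (entriesOn x.1.1.arrows S)) :
    coassociator (deltaCh k s t) (subdiagram k x w S) = -disjointChordSum k x w S := by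
  rw [coassociator_apply, assoc_rTensor_deltaCh_subdiagram hS hw,
    lTensor_deltaCh_subdiagram hS hw]
  exact sub_add_cancel_left (nestedChordSum k x w S) _

theorem tau12_coassociator_deltaCh_subdiagram (hS : S ⊆ range x.1.1.arrows.length)
    (hw : IsPathFrom s t w (entriesOn x.1.1.arrows S)) :
    tau12 k (ChRt k s t) (coassociator (deltaCh k s t) (subdiagram k x w S)) =
      coassociator (deltaCh k s t) (subdiagram k x w S) := by
  rw [coassociator_deltaCh_subdiagram hS hw]
  exact (map_neg (tau12 k (ChRt k s t)) _).trans (congrArg Neg.neg (tau12_disjointChordSum x w S))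

theorem tau12_coassociator_deltaCh_single (x : PCD s t) :
    tau12 k (ChRt k s t) (coassociator (deltaCh k s t) (Finsupp.single x 1)) =
      coassociator (deltaCh k s t) (Finsupp.single x 1) := by
  rw [← subdiagram_range_length x]
  refine tau12_coassociator_deltaCh_subdiagram subset_rfl ?_
  rw [entriesOn_range_length]
  exact x.1.1.valid

end Subdiagram

/-- `(Ch_rt, δ_{p,rt})` is a pre-Lie coalgebra. -/
theorem deltaCh_isPreLieComul : IsPreLieComul (deltaCh k s t) := by
  refine (isPreLieComul_iff_of_basis Finsupp.basisSingleOne).2 fun x => ?_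
  rw [Finsupp.coe_basisSingleOne]
  exact tau12_coassociator_deltaCh_single x

end
end
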